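/- For any finitely generated amenable group Γ, the class [𝔽₂[Γ]] of the free module of rank one generates an infinite cyclic subgroup of the Grothendieck group G(𝔽₂[Γ]) of finitely generated left 𝔽₂[Γ]-modules. -/

import Mathlib

open Filter Topology Pointwise

instance : TopologicalSpace (ZMod 2) := ⊥
instance : DiscreteTopology (ZMod 2) := ⟨rfl⟩

variable {G : Type*} [Group G] [DecidableEq G]

/-- Left translation action on functions. -/
def ltv (M : Type*) (γ : G) (f : G → M) : G → M := fun δ => f (γ⁻¹ * δ)

/-- A `Γ`-invariant linear subspace. -/
def InvariantSub (M : Type*) [AddCommGroup M] [Module (ZMod 2) M]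
    (W : Submodule (ZMod 2) (G → M)) : Prop :=
  ∀ γ : G, ∀ f ∈ W, ltv M γ f ∈ W

/-- The space of restrictions of elements of `W` to `Λ`. -/
noncomputable def resSpace {M : Type*} [AddCommGroup M] [Module (ZMod 2) M]
    (W : Submodule (ZMod 2) (G → M)) (Λ : Finset G) :
    Submodule (ZMod 2) (↥Λ → M) :=
  W.map (LinearMap.funLeft (ZMod 2) M (Subtype.val : ↥Λ → G))

/-- The entropy of a `Γ`-invariant linear subspace, along a Følner exhaustion. -/
noncomputable def entropy {M : Type*} [AddCommGroup M] [Module (ZMod 2) M]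
    (F : ℕ → Finset G) (W : Submodule (ZMod 2) (G → M)) : ℝ :=
  Filter.limsup
    (fun n => (Module.finrank (ZMod 2) ↥(resSpace W (F n)) : ℝ) / (F n).card) atTop

/-- `S` is a finite symmetric generating set containing `1`. -/
def SymmGen (S : Finset G) : Prop :=
  (1 : G) ∈ S ∧ (∀ s ∈ S, s⁻¹ ∈ S) ∧ Subgroup.closure (S : Set G) = ⊤

/-- A Følner exhaustion with respect to the word metric of `S`:
`S ^ r * F n` is the `r`-neighbourhood of `F n`. -/
structure FolnerSeq (S : Finset G) (F : ℕ → Finset G) : Prop where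
  one_mem : (1 : G) ∈ F 0
  mono : Monotone F
  exhaust : ∀ g : G, ∃ n, g ∈ F n
  folner : ∀ r : ℕ,
    Tendsto (fun n => (((S ^ r * F n) \ F n).card : ℝ) / (F n).card) atTop (𝓝 0)

/-- Presentations of finitely generated left `R`-modules: a number of generators `n`
together with a submodule of relations in `R^n`. Every finitely generated left
`R`-module is isomorphic to `ModOf R q` for some presentation `q`. -/
def Pres (R : Type*) [Ring R] := Σ n : ℕ, Submodule R (Fin n → R)

/-- The finitely generated module presented by `q`. -/
def ModOf (R : Type*) [Ring R] (q : Pres R) := (Fin q.1 → R) ⧸ q.2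

noncomputable instance (R : Type*) [Ring R] (q : Pres R) : AddCommGroup (ModOf R q) :=
  inferInstanceAs (AddCommGroup ((Fin q.1 → R) ⧸ q.2))

noncomputable instance (R : Type*) [Ring R] (q : Pres R) : Module R (ModOf R q) :=
  inferInstanceAs (Module R ((Fin q.1 → R) ⧸ q.2))

/-- The relators `[M] + [N] − [L]` coming from short exact sequences
`0 → M → L → N → 0` of finitely generated left `R`-modules. -/
def relSet (R : Type*) [Ring R] : Set (FreeAbelianGroup (Pres R)) :=
  {x | ∃ a b c : Pres R, ∃ f : ModOf R a →ₗ[R] ModOf R c,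
    ∃ g : ModOf R c →ₗ[R] ModOf R b,
    Function.Injective f ∧ Function.Surjective g ∧
    LinearMap.range f = LinearMap.ker g ∧
    x = FreeAbelianGroup.of a + FreeAbelianGroup.of b - FreeAbelianGroup.of c}

/-- The Grothendieck group `G(R)` of finitely generated left `R`-modules. -/
def GGroup (R : Type*) [Ring R] :=
  FreeAbelianGroup (Pres R) ⧸ AddSubgroup.closure (relSet R)

noncomputable instance (R : Type*) [Ring R] : AddCommGroup (GGroup R) :=
  inferInstanceAs (AddCommGroup
    (FreeAbelianGroup (Pres R) ⧸ AddSubgroup.closure (relSet R)))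

/-- The class `[R] ∈ G(R)` of the free module of rank one (presented by one generator
and no relations). -/
def clsR (R : Type*) [Ring R] : GGroup R :=
  QuotientAddGroup.mk (FreeAbelianGroup.of ⟨1, ⊥⟩)

/-!
The rank of a finitely generated `k[Γ]`-module `M` is the infimum of `dim (A · V) / #A` over the
nonempty finite sets `A ⊆ Γ`, where `V` is a finite-dimensional generating subspace of `M`. Modulo
any fixed subspace of `M`, the dimension of `A · V` is a submodular function of `A`, so Shearer's
inequality for the translates of one set `A` bounds the dimension of `Λ · V` for all large Følner
sets `Λ`. Hence the infimum is a limit along the Følner sets, and the same estimate modulo `Λ · V₁`,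
where `V₁` generates a submodule, shows that the rank is additive on short exact sequences. The
rank therefore induces a homomorphism from the Grothendieck group to `ℝ`; it maps `[k[Γ]]` to `1`.
-/

section Polymatroid

open scoped Finset

variable {α ι : Type*} [DecidableEq α]

/-- A finitary integral polymatroid rank function: normalized, monotone and submodular. -/
structure IsPolymatroid (φ : Finset α → ℕ) : Prop where
  map_empty : φ ∅ = 0
  mono : Monotone φ
  submodular : ∀ A B, φ (A ∪ B) + φ (A ∩ B) ≤ φ A + φ B

theorem IsPolymatroid.shearer {φ : Finset α → ℕ} (hφ : IsPolymatroid φ) (T : Finset ι)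
    (B : ι → Finset α) {c : ℕ} {Λ : Finset α} (hc : ∀ x ∈ Λ, c ≤ #{t ∈ T | x ∈ B t}) :
    c * φ Λ ≤ ∑ t ∈ T, φ (B t ∩ Λ) := by
  induction Λ using Finset.induction_on with
  | empty => simp [hφ.map_empty]
  | insert x Λ _ ih =>
    obtain ⟨d, hd⟩ := Nat.exists_eq_add_of_le (hφ.mono (Finset.subset_insert x Λ))
    have marginal (t : ι) :
        φ (B t ∩ Λ) + (if x ∈ B t then d else 0) ≤ φ (B t ∩ insert x Λ) := by
      split_ifs with hx
      · have union_eq : B t ∩ insert x Λ ∪ Λ = insert x Λ := by grind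
        have inter_eq : B t ∩ insert x Λ ∩ Λ = B t ∩ Λ := by grind
        have := hφ.submodular (B t ∩ insert x Λ) Λ
        rw [union_eq, inter_eq] at this
        omega
      · exact hφ.mono (Finset.inter_subset_inter_left (Finset.subset_insert x Λ))
    calc c * φ (insert x Λ)
        = c * φ Λ + c * d := by rw [hd, mul_add]
      _ ≤ ∑ t ∈ T, φ (B t ∩ Λ) + #{t ∈ T | x ∈ B t} * d :=
          add_le_add (ih fun y hy => hc y (Finset.mem_insert_of_mem hy))
            (Nat.mul_le_mul_right d (hc x (Finset.mem_insert_self x Λ)))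
      _ = ∑ t ∈ T, (φ (B t ∩ Λ) + if x ∈ B t then d else 0) := by
          rw [Finset.sum_add_distrib, ← Finset.sum_filter, Finset.sum_const, smul_eq_mul]
      _ ≤ ∑ t ∈ T, φ (B t ∩ insert x Λ) := Finset.sum_le_sum fun t _ => marginal t

end Polymatroid

section Folner

open scoped Finset

variable {Γ : Type*} [Group Γ] [DecidableEq Γ]

/-- Nets of nonempty finite subsets of `Γ` that are asymptotically invariant under right
translation; a group is amenable if and only if it admits one. Right rather than left translation
is what matters for the growth of the subspaces `Λ · V` of a left module. -/
structure IsRightFolner {ι : Type*} (l : Filter ι) (F : ι → Finset Γ) : Prop where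
  eventually_nonempty : ∀ᶠ i in l, (F i).Nonempty
  tendsto_boundary : ∀ K : Finset Γ,
    Tendsto (fun i => (#((F i * K) \ F i) : ℝ) / #(F i)) l (𝓝 0)

theorem SymmGen.exists_subset_pow {S : Finset Γ} (hS : SymmGen S) (K : Finset Γ) :
    ∃ r : ℕ, K ⊆ S ^ r := by
  obtain ⟨one_mem, inv_mem, closure_eq⟩ := hS
  have mem_pow (g : Γ) : ∃ r : ℕ, g ∈ S ^ r := by
    have hg : g ∈ Subgroup.closure (S : Set Γ) := closure_eq ▸ Subgroup.mem_top g
    induction hg using Subgroup.closure_induction'' with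
    | one => exact ⟨0, by simp⟩
    | mem x hx => exact ⟨1, by simpa using hx⟩
    | inv_mem x hx => exact ⟨1, by simpa using inv_mem x hx⟩
    | mul x y _ _ hx hy =>
      obtain ⟨m, hm⟩ := hx
      obtain ⟨n, hn⟩ := hy
      exact ⟨m + n, pow_add S m n ▸ Finset.mul_mem_mul hm hn⟩
  choose r hr using mem_pow
  exact ⟨K.sup r, fun g hg => Finset.pow_subset_pow_right one_mem (Finset.le_sup hg) (hr g)⟩

theorem FolnerSeq.isRightFolner_inv {S : Finset Γ} {F : ℕ → Finset Γ} (hF : FolnerSeq S F)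
    (hS : SymmGen S) : IsRightFolner atTop fun n => (F n)⁻¹ where
  eventually_nonempty := .of_forall fun n =>
    ⟨1, by simpa using hF.mono (Nat.zero_le n) hF.one_mem⟩
  tendsto_boundary K := by
    obtain ⟨r, hr⟩ := hS.exists_subset_pow K⁻¹
    refine squeeze_zero (fun n => by positivity) (fun n => ?_) (hF.folner r)
    have boundary_inv_subset : (((F n)⁻¹ * K) \ (F n)⁻¹)⁻¹ ⊆ (S ^ r * F n) \ F n := by
      intro x hx
      simp only [Finset.mem_inv', Finset.mem_sdiff, inv_inv] at hx ⊢
      rw [← Finset.mem_inv', mul_inv_rev, inv_inv] at hx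
      exact ⟨Finset.mul_subset_mul_right hr hx.1, hx.2⟩
    rw [Finset.card_inv, ← Finset.card_inv (((F n)⁻¹ * K) \ (F n)⁻¹)]
    gcongr

theorem card_le_card_filter_mem_smul {A K Λ : Finset Γ} (hAK : A⁻¹ ⊆ K) {x : Γ} (hx : x ∈ Λ) :
    #A ≤ #{t ∈ Λ * K | x ∈ t • A} := by
  refine Finset.card_le_card_of_injOn (fun a => x * a⁻¹) (fun a ha => ?_) (by simp)
  simp only [Finset.coe_filter, Set.mem_ofPred_eq]
  exact ⟨Finset.mul_mem_mul hx (hAK (Finset.inv_mem_inv ha)),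
    Finset.mem_smul_finset.2 ⟨a, ha, by simp⟩⟩

theorem card_filter_not_smul_subset_le {K : Finset Γ} (hK : 1 ∈ K) (Λ : Finset Γ) :
    #{t ∈ Λ * K | ¬ t • K ⊆ Λ} ≤ #((Λ * K) \ Λ) * #K := by
  have subset_boundary : {t ∈ Λ * K | ¬ t • K ⊆ Λ} ⊆ ((Λ * K) \ Λ) * K⁻¹ := by
    intro t ht
    obtain ⟨htK, htΛ⟩ := Finset.mem_filter.1 ht
    by_cases ht : t ∈ Λ
    · obtain ⟨_, hy, hyΛ⟩ := Finset.not_subset.1 htΛ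
      obtain ⟨g, hg, rfl⟩ := Finset.mem_smul_finset.1 hy
      exact Finset.mem_mul.2 ⟨t * g, Finset.mem_sdiff.2 ⟨Finset.mul_mem_mul ht hg, hyΛ⟩,
        g⁻¹, Finset.inv_mem_inv hg, by simp⟩
    · exact Finset.mem_mul.2 ⟨t, Finset.mem_sdiff.2 ⟨htK, ht⟩, 1, by simpa using hK, mul_one t⟩
  simpa using (Finset.card_le_card subset_boundary).trans Finset.card_mul_le

/-- Shearer's inequality for the translates `t • A`, which cover `Λ` at least `#A` times; only
those `t` with `t • K ⊈ Λ` escape the bound by `a`, and they lie near the boundary of `Λ`. -/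
theorem IsPolymatroid.card_mul_le {φ : Finset Γ → ℕ} (hφ : IsPolymatroid φ) {A K Λ : Finset Γ}
    (hK : 1 ∈ K) (hAK : A⁻¹ ⊆ K) {a b : ℕ} (ha : ∀ t : Γ, t • K ⊆ Λ → φ (t • A) ≤ a)
    (hb : ∀ t : Γ, φ (t • A) ≤ b) :
    #A * φ Λ ≤ #Λ * a + #((Λ * K) \ Λ) * (#K * b) := by
  have card_interior_le : #{t ∈ Λ * K | t • K ⊆ Λ} ≤ #Λ := by
    refine Finset.card_le_card fun t ht => (Finset.mem_filter.1 ht).2 ?_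
    simpa using Finset.smul_mem_smul_finset (a := t) hK
  calc #A * φ Λ
      ≤ ∑ t ∈ Λ * K, φ (t • A ∩ Λ) :=
        hφ.shearer _ _ fun _ hx => card_le_card_filter_mem_smul hAK hx
    _ ≤ ∑ t ∈ Λ * K, φ (t • A) :=
        Finset.sum_le_sum fun _ _ => hφ.mono Finset.inter_subset_left
    _ = ∑ t ∈ Λ * K with t • K ⊆ Λ, φ (t • A) + ∑ t ∈ Λ * K with ¬ t • K ⊆ Λ, φ (t • A) :=
        (Finset.sum_filter_add_sum_filter_not _ _ _).symm
    _ ≤ #{t ∈ Λ * K | t • K ⊆ Λ} * a + #{t ∈ Λ * K | ¬ t • K ⊆ Λ} * b :=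
        add_le_add
          (Finset.sum_le_card_nsmul _ _ _ fun t ht => ha t (Finset.mem_filter.1 ht).2)
          (Finset.sum_le_card_nsmul _ _ _ fun t _ => hb t)
    _ ≤ #Λ * a + #((Λ * K) \ Λ) * #K * b := by
        gcongr
        exact card_filter_not_smul_subset_le hK Λ
    _ = #Λ * a + #((Λ * K) \ Λ) * (#K * b) := by rw [mul_assoc]

end Folner

section LinearAlgebra

open Module

variable {k M N P : Type*} [DivisionRing k] [AddCommGroup M] [Module k M]
  [AddCommGroup N] [Module k N] [AddCommGroup P] [Module k P]

theorem finrank_map_add_finrank_inf_ker (f : M →ₗ[k] N) (U : Submodule k M)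
    [FiniteDimensional k U] :
    finrank k (U.map f) + finrank k ↥(U ⊓ LinearMap.ker f) = finrank k U := by
  have h := (f.domRestrict U).finrank_range_add_finrank_ker
  rwa [LinearMap.range_domRestrict, LinearMap.ker_domRestrict,
    ← Submodule.finrank_map_subtype_eq, Submodule.map_comap_subtype] at h

theorem finrank_map_le_finrank_map_of_inf_ker_le {f : M →ₗ[k] N} {g : M →ₗ[k] P}
    {U : Submodule k M} [FiniteDimensional k U]
    (h : U ⊓ LinearMap.ker f ≤ LinearMap.ker g) :
    finrank k (U.map g) ≤ finrank k (U.map f) := by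
  have hf := finrank_map_add_finrank_inf_ker f U
  have hg := finrank_map_add_finrank_inf_ker g U
  have := Submodule.finrank_mono (le_inf inf_le_left h)
  omega

theorem isPolymatroid_finrank_sup {α : Type*} [DecidableEq α] (W : α → Submodule k M)
    [∀ a, FiniteDimensional k (W a)] :
    IsPolymatroid fun A : Finset α => finrank k ↥(A.sup W) where
  map_empty := by rw [Finset.sup_empty, finrank_bot]
  mono _ _ hAB := Submodule.finrank_mono (Finset.sup_mono hAB)
  submodular A B := by
    rw [Finset.sup_union, ← Submodule.finrank_sup_add_finrank_inf_eq (A.sup W) (B.sup W)]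
    refine Nat.add_le_add_left (Submodule.finrank_mono (le_inf ?_ ?_)) _
    · exact Finset.sup_mono Finset.inter_subset_left
    · exact Finset.sup_mono Finset.inter_subset_right

end LinearAlgebra

section Dilate

open Module
open scoped MonoidAlgebra Finset

variable {k Γ M N P : Type*} [DivisionRing k] [Group Γ]
  [AddCommGroup M] [Module k[Γ] M] [Module k M] [IsScalarTower k k[Γ] M]
  [AddCommGroup N] [Module k[Γ] N] [Module k N] [IsScalarTower k k[Γ] N]
  [AddCommGroup P] [Module k P]

variable (k M) in
/-- The action of the elements of `Γ` on a `k[Γ]`-module, as `k`-linear endomorphisms. -/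
noncomputable def translation : Γ →* Module.End k M where
  toFun g :=
    { toFun x := MonoidAlgebra.of k Γ g • x
      map_add' := smul_add _
      map_smul' c x := by
        rw [RingHom.id_apply, ← smul_one_smul k[Γ] c x, smul_smul, ← smul_assoc]
        congr 1
        ext
        simp [MonoidAlgebra.one_def, MonoidAlgebra.single_mul_single] }
  map_one' := by
    ext x
    exact one_smul k[Γ] x
  map_mul' g h := by
    ext x
    exact (congrArg (· • x) (map_mul (MonoidAlgebra.of k Γ) g h)).trans (mul_smul _ _ x)

theorem translation_apply (g : Γ) (x : M) : translation k M g x = MonoidAlgebra.of k Γ g • x := rfl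

/-- The sum `A · V` of the translates of the subspace `V` by the elements of `A`. -/
noncomputable def dilate (A : Finset Γ) (V : Submodule k M) : Submodule k M :=
  A.sup fun a => V.map (translation k M a)

instance (A : Finset Γ) (V : Submodule k M) [FiniteDimensional k V] :
    FiniteDimensional k (dilate A V) :=
  Submodule.finiteDimensional_finset_sup A _

theorem dilate_mono {A B : Finset Γ} {V W : Submodule k M} (hAB : A ⊆ B) (hVW : V ≤ W) :
    dilate A V ≤ dilate B W :=
  (Finset.sup_mono_fun fun _ _ => Submodule.map_mono hVW).trans (Finset.sup_mono hAB)

theorem dilate_bot (A : Finset Γ) : dilate A (⊥ : Submodule k M) = ⊥ := by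
  simp [dilate, Finset.sup_eq_iSup]

theorem map_dilate (π : M →ₗ[k] P) (A : Finset Γ) (V : Submodule k M) :
    (dilate A V).map π = A.sup fun a => V.map (π ∘ₗ translation k M a) := by
  simp only [dilate, Finset.sup_eq_iSup, Submodule.map_iSup, ← Submodule.map_comp]

theorem map_restrictScalars_dilate (f : M →ₗ[k[Γ]] N) (A : Finset Γ) (V : Submodule k M) :
    (dilate A V).map (f.restrictScalars k) = dilate A (V.map (f.restrictScalars k)) := by
  have map_comm (a : Γ) : f.restrictScalars k ∘ₗ translation k M a =
      translation k N a ∘ₗ f.restrictScalars k := by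
    ext x
    exact map_smul f _ x
  rw [map_dilate]
  simp only [map_comm, Submodule.map_comp, dilate]

theorem map_translation_dilate [DecidableEq Γ] (g : Γ) (A : Finset Γ) (V : Submodule k M) :
    (dilate A V).map (translation k M g) = dilate (g • A) V := by
  rw [map_dilate, dilate, Finset.smul_finset_def, Finset.sup_image]
  simp only [Function.comp_def, smul_eq_mul, map_mul, Module.End.mul_eq_comp]

theorem exists_mem_dilate_of_mem_span {V : Submodule k M} {x : M}
    (hx : x ∈ Submodule.span k[Γ] (V : Set M)) : ∃ K : Finset Γ, x ∈ dilate K V := by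
  classical
  have exists_add {x y : M} : (∃ K : Finset Γ, x ∈ dilate K V) → (∃ K : Finset Γ, y ∈ dilate K V) →
      ∃ K : Finset Γ, x + y ∈ dilate K V := by
    rintro ⟨K, hK⟩ ⟨L, hL⟩
    exact ⟨K ∪ L, add_mem (dilate_mono Finset.subset_union_left le_rfl hK)
      (dilate_mono Finset.subset_union_right le_rfl hL)⟩
  induction hx using Submodule.span_induction with
  | mem x hx => exact ⟨{1}, by simpa [dilate] using hx⟩
  | zero => exact ⟨∅, zero_mem _⟩
  | add x y _ _ hx hy => exact exists_add hx hy
  | smul r x _ hx =>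
    induction r using MonoidAlgebra.induction_linear with
    | zero => exact ⟨∅, by simp⟩
    | add r s hr hs => simpa only [add_smul] using exists_add hr hs
    | single g c =>
      obtain ⟨K, hK⟩ := hx
      have smul_eq : MonoidAlgebra.single g c • x = c • translation k M g x := by
        rw [translation_apply, ← smul_assoc, MonoidAlgebra.smul_of]
      refine ⟨g • K, ?_⟩
      rw [smul_eq, ← map_translation_dilate]
      exact Submodule.smul_mem _ c (Submodule.mem_map_of_mem hK)

theorem exists_le_dilate {U V : Submodule k M} (hU : U.FG)
    (hUV : U ≤ (Submodule.span k[Γ] (V : Set M)).restrictScalars k) :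
    ∃ K : Finset Γ, U ≤ dilate K V := by
  classical
  obtain ⟨s, rfl⟩ := hU
  choose! K hK using fun (x : M) (hx : x ∈ (s : Set M)) =>
    exists_mem_dilate_of_mem_span (hUV (Submodule.subset_span hx))
  exact ⟨s.biUnion K, Submodule.span_le.2 fun x hx =>
    dilate_mono (Finset.subset_biUnion_of_mem K hx) le_rfl (hK x hx)⟩

theorem finrank_dilate_span_one (A : Finset Γ) :
    finrank k (dilate A (Submodule.span k {(1 : k[Γ])})) = #A := by
  have dilate_eq : dilate A (Submodule.span k {(1 : k[Γ])}) =
      Submodule.span k (Set.range (MonoidAlgebra.basis Γ k ∘ ((↑) : A → Γ))) := by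
    rw [Set.range_comp, Subtype.range_coe, ← Set.biUnion_of_singleton (_ '' _),
      Set.biUnion_image, Submodule.span_iUnion₂, dilate, Finset.sup_eq_iSup]
    simp [Submodule.map_span, translation_apply]
  rw [dilate_eq, finrank_span_eq_card
    ((MonoidAlgebra.basis Γ k).linearIndependent.comp _ Subtype.val_injective),
    Fintype.card_coe]

theorem isPolymatroid_finrank_map_dilate [DecidableEq Γ] (π : M →ₗ[k] P) (V : Submodule k M)
    [FiniteDimensional k V] : IsPolymatroid fun A : Finset Γ => finrank k ((dilate A V).map π) := by
  have map_eq : (fun A : Finset Γ => finrank k ((dilate A V).map π)) =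
      fun A => finrank k (A.sup fun a => V.map (π ∘ₗ translation k M a) : Submodule k P) :=
    funext fun A => by rw [map_dilate]
  rw [map_eq]
  exact isPolymatroid_finrank_sup _

theorem finrank_map_dilate_smul_le [DecidableEq Γ] (f : M →ₗ[k[Γ]] N) (π : M →ₗ[k] P)
    {V V₁ : Submodule k M} [FiniteDimensional k V] {A K : Finset Γ}
    (hK : dilate A V ⊓ LinearMap.ker (f.restrictScalars k) ≤ dilate K V₁) {t : Γ}
    (hπ : dilate (t • K) V₁ ≤ LinearMap.ker π) :
    finrank k ((dilate (t • A) V).map π) ≤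
      finrank k (dilate A (V.map (f.restrictScalars k))) := by
  rw [← map_translation_dilate, ← Submodule.map_comp, ← map_restrictScalars_dilate]
  refine finrank_map_le_finrank_map_of_inf_ker_le (hK.trans ?_)
  rwa [LinearMap.ker_comp, ← Submodule.map_le_iff_le_comap, map_translation_dilate]

theorem exists_card_mul_finrank_dilate_le [DecidableEq Γ] (f : M →ₗ[k[Γ]] N) (V V₁ : Submodule k M)
    [FiniteDimensional k V] [FiniteDimensional k V₁]
    (hf : LinearMap.ker f ≤ Submodule.span k[Γ] (V₁ : Set M)) (A : Finset Γ) :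
    ∃ (K : Finset Γ) (C : ℕ), ∀ Λ : Finset Γ,
      #A * finrank k (dilate Λ V) ≤ #A * finrank k (dilate Λ V₁) +
        (#Λ * finrank k (dilate A (V.map (f.restrictScalars k))) + #((Λ * K) \ Λ) * C) := by
  obtain ⟨K₀, hK₀⟩ : ∃ K₀ : Finset Γ,
      dilate A V ⊓ LinearMap.ker (f.restrictScalars k) ≤ dilate K₀ V₁ :=
    exists_le_dilate (Submodule.fg_iff_finiteDimensional _ |>.2 inferInstance)
      fun _ hx => hf hx.2
  let K := insert 1 (K₀ ∪ A⁻¹)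
  refine ⟨K, #K * finrank k (dilate A V), fun Λ => ?_⟩
  let π := (dilate Λ V₁).mkQ
  have interior_bound (t : Γ) (ht : t • K ⊆ Λ) : finrank k ((dilate (t • A) V).map π) ≤
      finrank k (dilate A (V.map (f.restrictScalars k))) := by
    refine finrank_map_dilate_smul_le f π hK₀ ?_
    rw [Submodule.ker_mkQ]
    refine dilate_mono ((Finset.smul_finset_subset_smul_finset ?_).trans ht) le_rfl
    exact Finset.subset_union_left.trans (Finset.subset_insert _ _)
  have boundary_bound (t : Γ) :
      finrank k ((dilate (t • A) V).map π) ≤ finrank k (dilate A V) := by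
    rw [← map_translation_dilate, ← Submodule.map_comp]
    exact Submodule.finrank_map_le _ _
  have finrank_le : finrank k (dilate Λ V) ≤
      finrank k (dilate Λ V₁) + finrank k ((dilate Λ V).map π) := by
    rw [← finrank_map_add_finrank_inf_ker π (dilate Λ V), Submodule.ker_mkQ, add_comm]
    gcongr
    exact Submodule.finrank_mono inf_le_right
  calc #A * finrank k (dilate Λ V)
      ≤ #A * finrank k (dilate Λ V₁) + #A * finrank k ((dilate Λ V).map π) := by
        rw [← mul_add]
        gcongr
    _ ≤ #A * finrank k (dilate Λ V₁) +
          (#Λ * finrank k (dilate A (V.map (f.restrictScalars k))) +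
            #((Λ * K) \ Λ) * (#K * finrank k (dilate A V))) := by
        gcongr
        exact (isPolymatroid_finrank_map_dilate π V).card_mul_le (Finset.mem_insert_self _ _)
          (Finset.subset_union_right.trans (Finset.subset_insert _ _))
          interior_bound boundary_bound

end Dilate

section MeanDim

open Module
open scoped MonoidAlgebra Finset

variable {k Γ M N ι : Type*} [DivisionRing k] [Group Γ]
  [AddCommGroup M] [Module k[Γ] M] [Module k M] [IsScalarTower k k[Γ] M]
  [AddCommGroup N] [Module k[Γ] N] [Module k N] [IsScalarTower k k[Γ] N]

/-- The dimension of `A · V` per element of `A`. -/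
noncomputable def avgDim (A : Finset Γ) (V : Submodule k M) : ℝ :=
  finrank k (dilate A V) / #A

variable (Γ) in
/-- The mean dimension of a finite-dimensional subspace `V` of a `k[Γ]`-module: the growth rate
of `dim (A · V) / #A`. The infimum over all nonempty `A` is also the limit along every right Følner
net, see `IsRightFolner.tendsto_avgDim`. -/
noncomputable def meanDim (V : Submodule k M) : ℝ :=
  ⨅ A : {A : Finset Γ // A.Nonempty}, avgDim A.1 V

theorem avgDim_nonneg (A : Finset Γ) (V : Submodule k M) : 0 ≤ avgDim A V := by
  unfold avgDim
  positivity

theorem meanDim_le_avgDim (V : Submodule k M) {A : Finset Γ} (hA : A.Nonempty) :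
    meanDim Γ V ≤ avgDim A V :=
  ciInf_le ⟨0, Set.forall_mem_range.2 fun _ => avgDim_nonneg _ _⟩
    (⟨A, hA⟩ : {A : Finset Γ // A.Nonempty})

theorem avgDim_bot (A : Finset Γ) : avgDim A (⊥ : Submodule k M) = 0 := by
  rw [avgDim, dilate_bot, finrank_bot, Nat.cast_zero, zero_div]

theorem meanDim_bot : meanDim Γ (⊥ : Submodule k M) = 0 := by
  simp only [meanDim, avgDim_bot, Real.iInf_const_zero]

theorem meanDim_span_one : meanDim Γ (Submodule.span k {(1 : k[Γ])}) = 1 := by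
  have avgDim_eq (A : {A : Finset Γ // A.Nonempty}) :
      avgDim A.1 (Submodule.span k {(1 : k[Γ])}) = 1 := by
    rw [avgDim, finrank_dilate_span_one, div_self]
    exact_mod_cast A.2.card_ne_zero
  have : Nonempty {A : Finset Γ // A.Nonempty} := ⟨⟨{1}, Finset.singleton_nonempty 1⟩⟩
  simp only [meanDim, avgDim_eq, ciInf_const]

theorem meanDim_map_of_injective {f : M →ₗ[k[Γ]] N} (hf : Function.Injective f)
    (V : Submodule k M) : meanDim Γ (V.map (f.restrictScalars k)) = meanDim Γ V := by
  have finrank_eq (A : Finset Γ) :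
      finrank k (dilate A (V.map (f.restrictScalars k))) = finrank k (dilate A V) := by
    rw [← map_restrictScalars_dilate]
    exact (Submodule.equivMapOfInjective (f.restrictScalars k) hf _).finrank_eq.symm
  simp only [meanDim, avgDim, finrank_eq]

variable [DecidableEq Γ]

theorem exists_avgDim_le (f : M →ₗ[k[Γ]] N) (V V₁ : Submodule k M)
    [FiniteDimensional k V] [FiniteDimensional k V₁]
    (hf : LinearMap.ker f ≤ Submodule.span k[Γ] (V₁ : Set M)) {A : Finset Γ} (hA : A.Nonempty) :
    ∃ (K : Finset Γ) (C : ℝ), ∀ Λ : Finset Γ, Λ.Nonempty → avgDim Λ V ≤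
      avgDim Λ V₁ + (avgDim A (V.map (f.restrictScalars k)) + #((Λ * K) \ Λ) / #Λ * C) := by
  obtain ⟨K, C, hKC⟩ := exists_card_mul_finrank_dilate_le f V V₁ hf A
  refine ⟨K, C / #A, fun Λ hΛ => ?_⟩
  have card_A_pos : (0 : ℝ) < #A := by exact_mod_cast hA.card_pos
  have card_Λ_pos : (0 : ℝ) < #Λ := by exact_mod_cast hΛ.card_pos
  rw [← mul_le_mul_iff_right₀ (mul_pos card_A_pos card_Λ_pos)]
  unfold avgDim
  field_simp
  exact_mod_cast hKC Λ

namespace IsRightFolner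

variable {l : Filter ι} {F : ι → Finset Γ}

theorem exists_eventually_avgDim_lt (hF : IsRightFolner l F) (f : M →ₗ[k[Γ]] N)
    (V V₁ : Submodule k M) [FiniteDimensional k V] [FiniteDimensional k V₁]
    (hf : LinearMap.ker f ≤ Submodule.span k[Γ] (V₁ : Set M)) {c : ℝ}
    (hc : meanDim Γ (V.map (f.restrictScalars k)) < c) :
    ∀ᶠ i in l, avgDim (F i) V < avgDim (F i) V₁ + c := by
  have : Nonempty {A : Finset Γ // A.Nonempty} := ⟨⟨{1}, Finset.singleton_nonempty 1⟩⟩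
  obtain ⟨⟨A, hA⟩, hAc⟩ := exists_lt_of_ciInf_lt hc
  obtain ⟨K, C, hKC⟩ := exists_avgDim_le f V V₁ hf hA
  have tendsto_bound : Tendsto (fun i => avgDim A (V.map (f.restrictScalars k)) +
      #((F i * K) \ F i) / #(F i) * C) l (𝓝 (avgDim A (V.map (f.restrictScalars k)))) := by
    simpa using ((hF.tendsto_boundary K).mul_const C).const_add
      (avgDim A (V.map (f.restrictScalars k)))
  filter_upwards [hF.eventually_nonempty, tendsto_bound.eventually_lt_const hAc] with i hi hic
  exact (hKC (F i) hi).trans_lt (by gcongr)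

theorem tendsto_avgDim (hF : IsRightFolner l F) (V : Submodule k M) [FiniteDimensional k V] :
    Tendsto (fun i => avgDim (F i) V) l (𝓝 (meanDim Γ V)) := by
  refine tendsto_order.2 ⟨fun c hc => ?_, fun c hc => ?_⟩
  · filter_upwards [hF.eventually_nonempty] with i hi
    exact hc.trans_le (meanDim_le_avgDim V hi)
  · have map_id : V.map ((LinearMap.id : M →ₗ[k[Γ]] M).restrictScalars k) = V := V.map_id
    have := hF.exists_eventually_avgDim_lt (LinearMap.id : M →ₗ[k[Γ]] M) V ⊥ (by simp)
      (map_id.symm ▸ hc)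
    simpa only [avgDim_bot, zero_add] using this

variable [l.NeBot]

theorem meanDim_le_add (hF : IsRightFolner l F) (f : M →ₗ[k[Γ]] N) (V V₁ : Submodule k M)
    [FiniteDimensional k V] [FiniteDimensional k V₁]
    (hf : LinearMap.ker f ≤ Submodule.span k[Γ] (V₁ : Set M)) :
    meanDim Γ V ≤ meanDim Γ V₁ + meanDim Γ (V.map (f.restrictScalars k)) := by
  refine le_of_forall_gt_imp_ge_of_dense fun c hc => ?_
  rw [← lt_sub_iff_add_lt'] at hc
  refine le_of_tendsto_of_tendsto (hF.tendsto_avgDim V)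
    (by simpa using (hF.tendsto_avgDim V₁).add_const (c - meanDim Γ V₁)) ?_
  filter_upwards [hF.exists_eventually_avgDim_lt f V V₁ hf hc] with i hi
  exact hi.le

theorem add_le_meanDim (hF : IsRightFolner l F) (f : M →ₗ[k[Γ]] N) {V V₁ : Submodule k M}
    [FiniteDimensional k V] (hV : V₁ ≤ V) (hf : V₁ ≤ LinearMap.ker (f.restrictScalars k)) :
    meanDim Γ V₁ + meanDim Γ (V.map (f.restrictScalars k)) ≤ meanDim Γ V := by
  have : FiniteDimensional k V₁ := Submodule.finiteDimensional_of_le hV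
  refine le_of_tendsto_of_tendsto' ((hF.tendsto_avgDim V₁).add (hF.tendsto_avgDim _))
    (hF.tendsto_avgDim V) fun i => ?_
  have dilate_le : dilate (F i) V₁ ≤ dilate (F i) V ⊓ LinearMap.ker (f.restrictScalars k) := by
    refine le_inf (dilate_mono subset_rfl hV) ?_
    rw [LinearMap.le_ker_iff_map, map_restrictScalars_dilate, LinearMap.le_ker_iff_map.1 hf,
      dilate_bot]
  unfold avgDim
  rw [← add_div, ← map_restrictScalars_dilate,
    ← finrank_map_add_finrank_inf_ker (f.restrictScalars k) (dilate (F i) V), Nat.cast_add,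
    add_comm]
  gcongr
  exact Submodule.finrank_mono dilate_le

theorem meanDim_le_of_le_span (hF : IsRightFolner l F) {V W : Submodule k M}
    [FiniteDimensional k V] [FiniteDimensional k W]
    (hWV : W ≤ (Submodule.span k[Γ] (V : Set M)).restrictScalars k) :
    meanDim Γ W ≤ meanDim Γ V := by
  let π := (Submodule.span k[Γ] (V : Set M)).mkQ
  have map_eq_bot : W.map (π.restrictScalars k) = ⊥ := by
    rwa [← LinearMap.le_ker_iff_map, LinearMap.ker_restrictScalars, Submodule.ker_mkQ]
  simpa [map_eq_bot, meanDim_bot] using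
    hF.meanDim_le_add π W V (Submodule.ker_mkQ _).le

end IsRightFolner

end MeanDim

section MeanRank

open Module
open scoped MonoidAlgebra

variable {k Γ M N P ι : Type*} [DivisionRing k] [Group Γ]
  [AddCommGroup M] [Module k[Γ] M] [Module k M] [IsScalarTower k k[Γ] M]
  [AddCommGroup N] [Module k[Γ] N] [Module k N] [IsScalarTower k k[Γ] N]
  [AddCommGroup P] [Module k[Γ] P] [Module k P] [IsScalarTower k k[Γ] P]

variable (k Γ M) in
/-- The rank of a finitely generated `k[Γ]`-module `M`, as the mean dimension of any
finite-dimensional generating subspace (`IsRightFolner.meanRank_eq`); the supremum makes it visibly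
independent of the choice, but is `0` if the mean dimensions are unbounded. For `k = 𝔽₂` this is
the entropy of the dual linear subshift. -/
noncomputable def meanRank : ℝ :=
  ⨆ V : {V : Submodule k M // V.FG}, meanDim Γ V.1

theorem span_map_restrictScalars (f : M →ₗ[k[Γ]] N) (V : Submodule k M) :
    Submodule.span k[Γ] (V.map (f.restrictScalars k) : Set N) =
      (Submodule.span k[Γ] (V : Set M)).map f := by
  rw [Submodule.map_span, Submodule.map_coe, LinearMap.coe_restrictScalars]

variable (k Γ M) in
theorem exists_fg_span_eq_top [Module.Finite k[Γ] M] :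
    ∃ V : Submodule k M, V.FG ∧ Submodule.span k[Γ] (V : Set M) = ⊤ := by
  obtain ⟨s, hs⟩ := Module.Finite.fg_top (R := k[Γ]) (M := M)
  exact ⟨Submodule.span k s, ⟨s, rfl⟩, by rw [Submodule.span_span_of_tower, hs]⟩

namespace IsRightFolner

variable [DecidableEq Γ] {l : Filter ι} [l.NeBot] {F : ι → Finset Γ}

theorem meanRank_eq (hF : IsRightFolner l F) {V : Submodule k M} (hV : V.FG)
    (hspan : Submodule.span k[Γ] (V : Set M) = ⊤) : meanRank k Γ M = meanDim Γ V := by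
  have meanDim_le (W : {W : Submodule k M // W.FG}) : meanDim Γ W.1 ≤ meanDim Γ V := by
    have := (Submodule.fg_iff_finiteDimensional V).1 hV
    have := (Submodule.fg_iff_finiteDimensional W.1).1 W.2
    refine hF.meanDim_le_of_le_span ?_
    rw [hspan, Submodule.restrictScalars_top]
    exact le_top
  have : Nonempty {W : Submodule k M // W.FG} := ⟨⟨V, hV⟩⟩
  exact le_antisymm (ciSup_le meanDim_le)
    (le_ciSup (f := fun W : {W : Submodule k M // W.FG} => meanDim Γ W.1)
      ⟨_, Set.forall_mem_range.2 meanDim_le⟩ ⟨V, hV⟩)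

theorem meanRank_eq_add (hF : IsRightFolner l F) [Module.Finite k[Γ] M] [Module.Finite k[Γ] N]
    {f : M →ₗ[k[Γ]] N} {g : N →ₗ[k[Γ]] P} (hf : Function.Injective f)
    (hg : Function.Surjective g) (hfg : LinearMap.range f = LinearMap.ker g) :
    meanRank k Γ N = meanRank k Γ M + meanRank k Γ P := by
  obtain ⟨U, hU, hUspan⟩ := exists_fg_span_eq_top k Γ M
  obtain ⟨W, hW, hWspan⟩ := exists_fg_span_eq_top k Γ N
  let U' := U.map (f.restrictScalars k)
  let V := U' ⊔ W
  have hU' : U'.FG := hU.map _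
  have hV : V.FG := hU'.sup hW
  have := (Submodule.fg_iff_finiteDimensional U').1 hU'
  have := (Submodule.fg_iff_finiteDimensional V).1 hV
  have span_V : Submodule.span k[Γ] (V : Set N) = ⊤ :=
    top_le_iff.1 (hWspan ▸ Submodule.span_mono (SetLike.coe_subset_coe.2 le_sup_right))
  have span_map_V : Submodule.span k[Γ] (V.map (g.restrictScalars k) : Set P) = ⊤ := by
    rw [span_map_restrictScalars, span_V, Submodule.map_top, LinearMap.range_eq_top.2 hg]
  have span_U' : Submodule.span k[Γ] (U' : Set N) = LinearMap.ker g := by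
    rw [span_map_restrictScalars, hUspan, Submodule.map_top, hfg]
  have U'_le_ker : U' ≤ LinearMap.ker (g.restrictScalars k) := fun _ hx =>
    span_U'.le (Submodule.subset_span hx)
  rw [hF.meanRank_eq hU hUspan, hF.meanRank_eq hV span_V, hF.meanRank_eq (hV.map _) span_map_V,
    ← meanDim_map_of_injective hf U]
  exact le_antisymm (hF.meanDim_le_add g V U' span_U'.ge)
    (hF.add_le_meanDim g le_sup_left U'_le_ker)

theorem meanRank_eq_one (hF : IsRightFolner l F) (e : k[Γ] ≃ₗ[k[Γ]] M) : meanRank k Γ M = 1 := by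
  have span_eq_top : Submodule.span k[Γ]
      ((Submodule.span k {(1 : k[Γ])}).map (e.toLinearMap.restrictScalars k) : Set M) = ⊤ := by
    rw [span_map_restrictScalars, Submodule.span_span_of_tower, ← Ideal.span,
      Ideal.span_singleton_one, Submodule.map_top, LinearEquiv.range]
  rw [hF.meanRank_eq ((Submodule.fg_span_singleton _).map _) span_eq_top,
    meanDim_map_of_injective e.injective, meanDim_span_one]

end IsRightFolner

end MeanRank

section GrothendieckGroup

open scoped MonoidAlgebra

/-- The presentation of `R` as a module over itself, on one generator without relations. -/
def Pres.self (R : Type*) [Ring R] : Pres R := ⟨1, ⊥⟩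

namespace GGroup

variable {R A : Type*} [Ring R] [AddCommGroup A]

/-- The homomorphism out of the Grothendieck group induced by a function on modules that is
additive on short exact sequences. -/
noncomputable def lift (d : Pres R → A)
    (hd : ∀ (a b c : Pres R) (f : ModOf R a →ₗ[R] ModOf R c) (g : ModOf R c →ₗ[R] ModOf R b),
      Function.Injective f → Function.Surjective g → LinearMap.range f = LinearMap.ker g →
        d c = d a + d b) : GGroup R →+ A :=
  QuotientAddGroup.lift _ (FreeAbelianGroup.lift d) <| (AddSubgroup.closure_le _).2 <| by
    rintro _ ⟨a, b, c, f, g, hf, hg, hfg, rfl⟩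
    simp [hd a b c f g hf hg hfg]

theorem lift_clsR (d : Pres R → A) (hd) : lift d hd (clsR R) = d (Pres.self R) :=
  FreeAbelianGroup.lift_apply_of d _

end GGroup

namespace ModOf

variable {k Γ : Type*} [DivisionRing k] [Group Γ]

noncomputable instance (q : Pres k[Γ]) : Module k (ModOf k[Γ] q) :=
  inferInstanceAs (Module k ((Fin q.1 → k[Γ]) ⧸ q.2))

instance (q : Pres k[Γ]) : IsScalarTower k k[Γ] (ModOf k[Γ] q) :=
  inferInstanceAs (IsScalarTower k k[Γ] ((Fin q.1 → k[Γ]) ⧸ q.2))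

instance (R : Type*) [Ring R] (q : Pres R) : Module.Finite R (ModOf R q) :=
  inferInstanceAs (Module.Finite R ((Fin q.1 → R) ⧸ q.2))

/-- The module presented by `Pres.self R` is `R`. -/
noncomputable def selfEquiv (R : Type*) [Ring R] : R ≃ₗ[R] ModOf R (Pres.self R) :=
  (LinearEquiv.funUnique (Fin 1) R R).symm ≪≫ₗ (Submodule.quotEquivOfEqBot ⊥ rfl).symm

end ModOf

theorem grothendieck_infinite_cyclic_general {k Γ ι : Type*} [DivisionRing k] [Group Γ]
    [DecidableEq Γ] {l : Filter ι} [l.NeBot] {F : ι → Finset Γ} (hF : IsRightFolner l F) :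
    ∀ z : ℤ, z ≠ 0 → z • clsR k[Γ] ≠ 0 := by
  let rank : GGroup k[Γ] →+ ℝ := GGroup.lift (fun q => meanRank k Γ (ModOf k[Γ] q))
    fun _ _ _ _ _ hf hg hfg => hF.meanRank_eq_add hf hg hfg
  have rank_clsR : rank (clsR k[Γ]) = 1 :=
    (GGroup.lift_clsR _ _).trans (hF.meanRank_eq_one (ModOf.selfEquiv k[Γ]))
  intro z hz h
  have rank_zsmul : rank (z • clsR k[Γ]) = z := by
    rw [map_zsmul, rank_clsR, zsmul_one]
  rw [h, map_zero] at rank_zsmul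
  exact hz (by exact_mod_cast rank_zsmul.symm)

end GrothendieckGroup

/-- For any finitely generated amenable group `Γ`, the class `[𝔽₂[Γ]]` of
the free module of rank one generates an infinite cyclic subgroup of the Grothendieck
group `G(𝔽₂[Γ])` of finitely generated left `𝔽₂[Γ]`-modules. -/
theorem grothendieck_infinite_cyclic
    (S : Finset G) (F : ℕ → Finset G) (hS : SymmGen S) (hF : FolnerSeq S F) :
    ∀ z : ℤ, z ≠ 0 → z • clsR (MonoidAlgebra (ZMod 2) G) ≠ 0 :=
  grothendieck_infinite_cyclic_general (hF.isRightFolner_inv hS)
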